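/- With the conditional Chen–Stein setup (finite index set I, sub-σ-field 𝒜, Bernoulli random variables X_α, neighbourhoods B_α ∋ α, S = Σ_{α∈I} X_α, and the 𝒜-measurable quantities b_1, b_2, b_3 defined below): for every μ > 0 and every Poisson random variable Z with parameter μ, d_TV(S, Z) ≤ E[min(1, b_1 + b_2 + b_3)] + E[min(1, |E[S | 𝒜] − μ|)]. -/

import Mathlib

/-!
Write `Λ = E[S | 𝒜] = ∑ p_α`, let `a` be the indicator of a set `A ⊆ ℕ`, and let `Po_s(a)` be the
mean of `a` under the Poisson law with parameter `s`. Then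
`P(S ∈ A) - Po_μ₀(A) = E[a(S) - Po_Λ(a)] + E[Po_Λ(a) - Po_μ₀(a)]`. In the second term
`d/ds Po_s(a) = Po_s(Δa) ∈ [-1, 1]`, so the integrand is at most `min(1, |Λ - μ₀|)` in absolute
value.

For the first term Stein's method is applied with the random parameter `Λ`. The solution of
`k f(k) - s f(k+1) = a(k) - Po_s(a)` is taken in the explicit form
`f(k+1) = ∫₀¹ E[Δa(Bin(k, u) + Poisson(s(1-u)))] du` (`steinSol`); the Stein equation is the
fundamental theorem of calculus for `u ↦ E[a(Bin(k, u) + Poisson(s(1-u)))]`, which runs from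
`Po_s(a)` at `u = 0` to `a(k)` at `u = 1`. From this form `|f| ≤ 1`, `|Δf| ≤ 1`, and measurability
in `s` are immediate, including at `s = 0`, so `f` with `s = Λ` is `𝒜`-measurable for each `k`.

Multiplying by the indicator of the `𝒜`-measurable event `G = {b₁ + b₂ + b₃ ≤ 1}` and running the
usual local-dependence argument index by index (`integral_stein_term_le`) bounds the first term on
`G` by `E[1_G (b₁ + b₂ + b₃)]`, while `P(Gᶜ)` bounds it off `G`; the sum is
`E[min(1, b₁ + b₂ + b₃)]`. Working with integrals against `1_G` avoids regular conditional
distributions, which need not exist on a general `Ω`.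
-/

open MeasureTheory ProbabilityTheory Filter

noncomputable section

namespace ChenStein

variable {Ω : Type*} {I : Type*} [Fintype I] [DecidableEq I]

/-- Total variation distance between two (laws of) `ℕ`-valued random variables. -/
def dTVNat (μ ν : Measure ℕ) : ℝ := ⨆ A : Set ℕ, |(μ A).toReal - (ν A).toReal|

/-- `pA m𝒜 P X α = E[X_α | 𝒜]`, the conditional expectation of the Bernoulli variable `X α`
given the sub-σ-field `m𝒜`. -/
def pA (m𝒜 : MeasurableSpace Ω) {mΩ : MeasurableSpace Ω} (P : Measure Ω)
    (X : I → Ω → ℕ) (α : I) : Ω → ℝ :=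
  P[fun ω => (X α ω : ℝ)|m𝒜]

/-- `b₁ = ∑_{α} ∑_{β ∈ B_α} p_α p_β` (an `𝒜`-measurable random quantity). -/
def b1 (m𝒜 : MeasurableSpace Ω) {mΩ : MeasurableSpace Ω} (P : Measure Ω)
    (X : I → Ω → ℕ) (B : I → Finset I) (ω : Ω) : ℝ :=
  ∑ α : I, ∑ β ∈ B α, pA m𝒜 P X α ω * pA m𝒜 P X β ω

/-- `b₂ = ∑_{α} ∑_{β ∈ B_α, β ≠ α} p_{αβ}` with `p_{αβ} = E[X_α X_β | 𝒜]`. -/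
def b2 (m𝒜 : MeasurableSpace Ω) {mΩ : MeasurableSpace Ω} (P : Measure Ω)
    (X : I → Ω → ℕ) (B : I → Finset I) (ω : Ω) : ℝ :=
  ∑ α : I, ∑ β ∈ (B α).erase α, (P[fun ω' => ((X α ω' * X β ω' : ℕ) : ℝ)|m𝒜]) ω

/-- The σ-field `σ(𝒜, X_β : β ∈ B_αᶜ)`. -/
def sigmaB (m𝒜 : MeasurableSpace Ω) (X : I → Ω → ℕ) (Bα : Finset I) : MeasurableSpace Ω :=
  m𝒜 ⊔ ⨆ (β : I) (_ : β ∉ Bα), MeasurableSpace.comap (X β) inferInstance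

/-- `b₃ = ∑_α E[ |E[X_α - p_α | σ(𝒜, X_β : β ∈ B_αᶜ)]| | 𝒜]`. -/
def b3 (m𝒜 : MeasurableSpace Ω) {mΩ : MeasurableSpace Ω} (P : Measure Ω)
    (X : I → Ω → ℕ) (B : I → Finset I) (ω : Ω) : ℝ :=
  ∑ α : I,
    (P[fun ω' =>
        abs ((P[fun ω'' => (X α ω'' : ℝ) - pA m𝒜 P X α ω''|sigmaB m𝒜 X (B α)]) ω')|m𝒜]) ω

/-- `condMean m𝒜 P X = E[S | 𝒜]` for `S = ∑_α X_α`. -/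
def condMean (m𝒜 : MeasurableSpace Ω) {mΩ : MeasurableSpace Ω} (P : Measure Ω)
    (X : I → Ω → ℕ) : Ω → ℝ :=
  P[fun ω => ((∑ α : I, X α ω : ℕ) : ℝ)|m𝒜]

end ChenStein

end

open MeasureTheory ProbabilityTheory Filter in
/-- `ν` is the Poisson distribution on `ℕ` with parameter `r`. -/
def IsPoissonNat (ν : Measure ℕ) (r : ℝ) : Prop :=
  IsProbabilityMeasure ν ∧ ∀ k : ℕ, (ν {k}).toReal = Real.exp (-r) * r ^ k / k.factorial

noncomputable section

namespace ChenStein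

/-! ### Poisson averages -/

/-- The mean of `g` under the Poisson law with parameter `s`. The defining formula is used for every
real `s`, so that it can be differentiated at `s = 0`; it is a mean only for `0 ≤ s`. -/
def poissonMean (s : ℝ) (g : ℕ → ℝ) : ℝ :=
  Real.exp (-s) * ∑' n : ℕ, g n * (s ^ n / n.factorial)

/-- The forward difference `g (n + 1) - g n`. -/
def fdiff (g : ℕ → ℝ) (n : ℕ) : ℝ := g (n + 1) - g n

/-- The shift `g (n + 1)`. -/
def shift (g : ℕ → ℝ) (n : ℕ) : ℝ := g (n + 1)

lemma abs_fdiff_le {g : ℕ → ℝ} {C : ℝ} (hg : ∀ n, |g n| ≤ C) (n : ℕ) : |fdiff g n| ≤ 2 * C := by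
  have h1 := hg n
  have h2 := hg (n + 1)
  rw [abs_le] at *
  unfold fdiff
  constructor <;> linarith

lemma summable_bdd_mul {g : ℕ → ℝ} {C : ℝ} (hg : ∀ n, |g n| ≤ C) (s : ℝ) :
    Summable fun n : ℕ => g n * (s ^ n / n.factorial) := by
  refine Summable.of_norm_bounded (g := fun n : ℕ => C * (|s| ^ n / n.factorial))
    ((Real.summable_pow_div_factorial |s|).mul_left C) fun n => ?_
  rw [norm_mul, norm_div, norm_pow, Real.norm_eq_abs, Real.norm_eq_abs, Real.norm_natCast]
  exact mul_le_mul_of_nonneg_right (hg n) (by positivity)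

lemma tsum_pow_div_factorial (s : ℝ) : ∑' n : ℕ, s ^ n / (n.factorial : ℝ) = Real.exp s := by
  rw [Real.exp_eq_exp_ℝ]
  exact (NormedSpace.expSeries_div_hasSum_exp s).tsum_eq

lemma abs_poissonMean_le {g : ℕ → ℝ} {C s : ℝ} (hg : ∀ n, |g n| ≤ C) (hs : 0 ≤ s) :
    |poissonMean s g| ≤ C := by
  have key : |∑' n : ℕ, g n * (s ^ n / n.factorial)| ≤ C * Real.exp s := by
    rw [← tsum_pow_div_factorial, ← tsum_mul_left, ← Real.norm_eq_abs]
    refine tsum_of_norm_bounded ((Real.summable_pow_div_factorial s).mul_left C).hasSum fun n => ?_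
    have h0 : 0 ≤ s ^ n / (n.factorial : ℝ) := by positivity
    rw [norm_mul, Real.norm_eq_abs, Real.norm_of_nonneg h0]
    exact mul_le_mul_of_nonneg_right (hg n) h0
  unfold poissonMean
  rw [abs_mul, abs_of_pos (Real.exp_pos _)]
  calc Real.exp (-s) * |∑' n : ℕ, g n * (s ^ n / n.factorial)|
      ≤ Real.exp (-s) * (C * Real.exp s) := by gcongr
    _ = C := by rw [Real.exp_neg]; field_simp

lemma poissonMean_nonneg {g : ℕ → ℝ} {s : ℝ} (hg : ∀ n, 0 ≤ g n) (hs : 0 ≤ s) :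
    0 ≤ poissonMean s g :=
  mul_nonneg (Real.exp_pos _).le (tsum_nonneg fun n => mul_nonneg (hg n) (by positivity))

lemma poissonMean_zero (g : ℕ → ℝ) : poissonMean 0 g = g 0 := by
  unfold poissonMean
  rw [tsum_eq_single 0 (fun n hn => by simp [hn])]
  simp

lemma poissonMean_shift_sub {g : ℕ → ℝ} {C : ℝ} (hg : ∀ n, |g n| ≤ C) (s : ℝ) :
    poissonMean s (shift g) - poissonMean s g = poissonMean s (fdiff g) := by
  unfold poissonMean
  rw [← mul_sub, ← (summable_bdd_mul (g := shift g) (fun n => hg _) s).tsum_sub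
    (summable_bdd_mul hg s)]
  simp only [shift, fdiff, sub_mul]

lemma hasDerivAt_tsum_bdd {g : ℕ → ℝ} {C : ℝ} (hg : ∀ n, |g n| ≤ C) (s : ℝ) :
    HasDerivAt (fun s : ℝ => ∑' n : ℕ, g n * (s ^ n / n.factorial))
      (∑' n : ℕ, shift g n * (s ^ n / n.factorial)) s := by
  set R : ℝ := |s| + 1
  have hC : 0 ≤ C := (abs_nonneg _).trans (hg 0)
  have hu : Summable fun n : ℕ => C * ((n : ℝ) * R ^ (n - 1) / n.factorial) := by
    refine Summable.mul_left C ?_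
    rw [← summable_nat_add_iff 1]
    refine (Real.summable_pow_div_factorial R).congr fun n => ?_
    rw [Nat.factorial_succ]
    push_cast
    have : (n : ℝ) + 1 ≠ 0 := by positivity
    field_simp
  have hmain := hasDerivAt_tsum_of_isPreconnected (y := s) (y₀ := s)
    (g := fun (n : ℕ) (s : ℝ) => g n * (s ^ n / n.factorial))
    (g' := fun (n : ℕ) (s : ℝ) => g n * ((n : ℝ) * s ^ (n - 1) / n.factorial))
    hu (Metric.isOpen_ball (x := (0 : ℝ)) (ε := R)) (convex_ball _ _).isPreconnected
    (fun n y _ => ((hasDerivAt_pow n y).div_const _).const_mul _)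
    (fun n y hy => by
      have hy' : |y| ≤ R := by simpa using (Metric.mem_ball.1 hy).le
      simp only [norm_mul, norm_div, norm_pow, Real.norm_natCast]
      rw [Real.norm_eq_abs, Real.norm_eq_abs]
      gcongr
      exact hg n)
    (by simp [R]) (summable_bdd_mul hg s) (by simp [R])
  convert! hmain using 1
  have hsum : Summable fun n : ℕ => g n * ((n : ℝ) * s ^ (n - 1) / n.factorial) := by
    refine Summable.of_norm_bounded hu fun n => ?_
    simp only [norm_mul, norm_div, norm_pow, Real.norm_natCast]
    rw [Real.norm_eq_abs, Real.norm_eq_abs]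
    have : |s| ≤ R := by simp [R]
    gcongr
    exact hg n
  rw [hsum.tsum_eq_zero_add]
  simp only [Nat.cast_zero, zero_mul, zero_div, mul_zero, zero_add]
  refine tsum_congr fun n => ?_
  rw [Nat.factorial_succ]
  push_cast
  have : (n : ℝ) + 1 ≠ 0 := by positivity
  simp only [shift]
  field_simp

lemma hasDerivAt_poissonMean {g : ℕ → ℝ} {C : ℝ} (hg : ∀ n, |g n| ≤ C) (s : ℝ) :
    HasDerivAt (fun s => poissonMean s g) (poissonMean s (fdiff g)) s := by
  have h := ((hasDerivAt_neg s).exp).mul (hasDerivAt_tsum_bdd hg s)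
  rw [← poissonMean_shift_sub hg]
  unfold poissonMean
  convert! h using 1
  ring

lemma abs_poissonMean_sub_le {g : ℕ → ℝ} {C D : ℝ} (hg : ∀ n, |g n| ≤ C)
    (hd : ∀ n, |fdiff g n| ≤ D) {s t : ℝ} (hs : 0 ≤ s) (ht : 0 ≤ t) :
    |poissonMean s g - poissonMean t g| ≤ D * |s - t| :=
  Convex.norm_image_sub_le_of_norm_hasDerivWithin_le (s := Set.Ici (0 : ℝ))
    (f := fun s => poissonMean s g)
    (fun x _ => (hasDerivAt_poissonMean hg x).hasDerivWithinAt)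
    (fun _ hx => abs_poissonMean_le hd hx) (convex_Ici 0) ht hs

/-! ### The Stein equation -/

/-- `interp s k u g` is the mean of `g (Y + Z)` for independent `Y ~ Bin(k, u)` and
`Z ~ Poisson(s (1 - u))`: the law at time `-log u` of the immigration–death process with immigration
rate `s` and unit death rate started from `k`. The recursion conditions on the last of the `k`
binomial trials. -/
def interp (s : ℝ) : ℕ → ℝ → (ℕ → ℝ) → ℝ
  | 0, u, g => poissonMean (s * (1 - u)) g
  | k + 1, u, g => (1 - u) * interp s k u g + u * interp s k u (shift g)

lemma interp_one (s : ℝ) (k : ℕ) (g : ℕ → ℝ) : interp s k 1 g = g k := by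
  induction k generalizing g with
  | zero => simp [interp, poissonMean_zero]
  | succ k ih => simp [interp, ih, shift]

lemma interp_zero (s : ℝ) (k : ℕ) (g : ℕ → ℝ) : interp s k 0 g = poissonMean s g := by
  induction k generalizing g with
  | zero => simp [interp]
  | succ k ih => simp [interp, ih]

lemma abs_interp_le {s u C : ℝ} (hs : 0 ≤ s) (hu0 : 0 ≤ u) (hu1 : u ≤ 1) (k : ℕ) {g : ℕ → ℝ}
    (hg : ∀ n, |g n| ≤ C) : |interp s k u g| ≤ C := by
  induction k generalizing g with
  | zero => exact abs_poissonMean_le hg (mul_nonneg hs (by linarith))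
  | succ k ih =>
    have h1 := abs_le.1 (ih hg)
    have h2 := abs_le.1 (ih (g := shift g) fun n => hg _)
    simp only [interp]
    rw [abs_le]
    constructor <;> nlinarith

lemma interp_shift_sub {g : ℕ → ℝ} {C : ℝ} (hg : ∀ n, |g n| ≤ C) (s : ℝ) (k : ℕ) (u : ℝ) :
    interp s k u (shift g) - interp s k u g = interp s k u (fdiff g) := by
  induction k generalizing g with
  | zero => exact poissonMean_shift_sub hg _
  | succ k ih =>
    have h1 := ih hg
    have h2 := ih (g := shift g) fun n => hg _
    have h3 : shift (fdiff g) = fdiff (shift g) := rfl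
    simp only [interp, h3]
    rw [← h1, ← h2]
    ring

/-- The Kolmogorov equation of the immigration–death process, in the time variable `u`. -/
lemma hasDerivAt_interp {g : ℕ → ℝ} {C : ℝ} (hg : ∀ n, |g n| ≤ C) (s : ℝ) (k : ℕ) (u : ℝ) :
    HasDerivAt (fun u => interp s k u g)
      (k * interp s (k - 1) u (fdiff g) - s * interp s k u (fdiff g)) u := by
  induction k generalizing g with
  | zero =>
    have h := (hasDerivAt_poissonMean hg (s * (1 - u))).comp u
      (((hasDerivAt_id u).const_sub 1).const_mul s)
    simp only [interp]
    convert! h using 1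
    push_cast
    ring
  | succ k ih =>
    have h := (((hasDerivAt_id u).const_sub 1).mul (ih hg)).add
      ((hasDerivAt_id u).mul (ih (g := shift g) fun n => hg _))
    have h3 : shift (fdiff g) = fdiff (shift g) := rfl
    have h4 : (k : ℝ) * interp s k u (fdiff g) = k * ((1 - u) * interp s (k - 1) u (fdiff g)
        + u * interp s (k - 1) u (fdiff (shift g))) := by
      cases k with
      | zero => simp
      | succ j => simp [interp, h3]
    have h5 := interp_shift_sub hg s k u
    simp only [interp, h3, Nat.add_sub_cancel]
    convert! h using 1
    push_cast
    simp only [id]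
    linear_combination -h5 + h4

lemma continuous_interp {g : ℕ → ℝ} {C : ℝ} (hg : ∀ n, |g n| ≤ C) (s : ℝ) (k : ℕ) :
    Continuous fun u => interp s k u g :=
  continuous_iff_continuousAt.2 fun u => (hasDerivAt_interp hg s k u).continuousAt

/-- `steinSol s a k` is the value at `k + 1` of the solution of the Stein equation of the Poisson
law with parameter `s` and test function `a`. -/
def steinSol (s : ℝ) (a : ℕ → ℝ) (k : ℕ) : ℝ := ∫ u in (0 : ℝ)..1, interp s k u (fdiff a)

lemma steinSol_eq {a : ℕ → ℝ} {C : ℝ} (ha : ∀ n, |a n| ≤ C) (s : ℝ) (k : ℕ) :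
    k * steinSol s a (k - 1) - s * steinSol s a k = a k - poissonMean s a := by
  have hc := fun k => continuous_interp (abs_fdiff_le ha) s k
  have h := intervalIntegral.integral_eq_sub_of_hasDerivAt (a := 0) (b := 1)
    (fun u _ => hasDerivAt_interp ha s k u)
    (((hc (k - 1)).const_mul _).sub ((hc k).const_mul _) |>.intervalIntegrable 0 1)
  rw [intervalIntegral.integral_sub (((hc (k - 1)).const_mul _).intervalIntegrable 0 1)
    (((hc k).const_mul _).intervalIntegrable 0 1), intervalIntegral.integral_const_mul,
    intervalIntegral.integral_const_mul, interp_one, interp_zero] at h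
  exact h

lemma abs_steinSol_le {a : ℕ → ℝ} (hd : ∀ n, |fdiff a n| ≤ 1) {s : ℝ} (hs : 0 ≤ s) (k : ℕ) :
    |steinSol s a k| ≤ 1 := by
  have h := intervalIntegral.norm_integral_le_of_norm_le_const (a := 0) (b := 1) (C := 1)
    (f := fun u => interp s k u (fdiff a)) (fun u hu => by
      rw [Set.uIoc_of_le zero_le_one] at hu
      exact abs_interp_le hs hu.1.le hu.2 k hd)
  simpa [steinSol] using h

/-- The second difference of `a` is at most `2` and it enters with the weight `u`, whose integral
over `[0, 1]` is `1 / 2`. -/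
lemma abs_steinSol_sub_le {a : ℕ → ℝ} (hd : ∀ n, |fdiff a n| ≤ 1) {s : ℝ} (hs : 0 ≤ s) (k : ℕ) :
    |steinSol s a (k + 1) - steinSol s a k| ≤ 1 := by
  have hc := fun k => (continuous_interp hd s k).intervalIntegrable (μ := volume) 0 1
  unfold steinSol
  rw [← intervalIntegral.integral_sub (hc _) (hc _)]
  have h := intervalIntegral.norm_integral_le_of_norm_le (a := 0) (b := 1) (μ := volume)
    (f := fun u => interp s (k + 1) u (fdiff a) - interp s k u (fdiff a))
    (g := fun u => u * 2) zero_le_one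
    (Eventually.of_forall fun u hu => by
      have h1 : interp s (k + 1) u (fdiff a) - interp s k u (fdiff a)
          = u * interp s k u (fdiff (fdiff a)) := by
        rw [← interp_shift_sub hd]
        simp only [interp]
        ring
      have h2 := abs_interp_le hs hu.1.le hu.2 k (abs_fdiff_le hd)
      rw [h1, norm_mul, Real.norm_of_nonneg hu.1.le, Real.norm_eq_abs]
      exact mul_le_mul_of_nonneg_left (by simpa using h2) hu.1.le)
    ((continuous_id.mul continuous_const).intervalIntegrable _ _)
  refine h.trans (le_of_eq ?_)
  rw [intervalIntegral.integral_mul_const, integral_id]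
  norm_num

lemma measurable_poissonMean {g : ℕ → ℝ} {C : ℝ} (hg : ∀ n, |g n| ≤ C) :
    Measurable fun s => poissonMean s g :=
  (continuous_iff_continuousAt.2 fun s => (hasDerivAt_poissonMean hg s).continuousAt).measurable

lemma measurable_interp {g : ℕ → ℝ} {C : ℝ} (hg : ∀ n, |g n| ≤ C) (k : ℕ) :
    Measurable fun p : ℝ × ℝ => interp p.1 k p.2 g := by
  induction k generalizing g with
  | zero =>
    exact (measurable_poissonMean hg).comp (measurable_fst.mul (measurable_const.sub measurable_snd))
  | succ k ih =>
    exact ((measurable_const.sub measurable_snd).mul (ih hg)).add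
      (measurable_snd.mul (ih (g := shift g) fun n => hg _))

lemma measurable_steinSol {a : ℕ → ℝ} {C : ℝ} (ha : ∀ n, |a n| ≤ C) (k : ℕ) :
    Measurable fun s => steinSol s a k := by
  unfold steinSol
  simp_rw [intervalIntegral.integral_of_le (zero_le_one (α := ℝ))]
  exact (StronglyMeasurable.integral_prod_right
    (measurable_interp (abs_fdiff_le ha) k).stronglyMeasurable).measurable

/-! ### Conditional expectations -/

lemma measurable_eval_random {Ω : Type*} {m : MeasurableSpace Ω} {h : ℕ → Ω → ℝ}
    (hh : ∀ k, Measurable (h k)) {V : Ω → ℕ} (hV : Measurable V) :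
    Measurable fun ω => h (V ω) ω :=
  (measurable_from_prod_countable_right (f := fun p : ℕ × Ω => h p.1 p.2) hh).comp
    (hV.prodMk measurable_id)

lemma measurable_indicator_one {Ω : Type*} {m : MeasurableSpace Ω} {G : Set Ω}
    (hG : MeasurableSet G) : Measurable (G.indicator (1 : Ω → ℝ)) :=
  measurable_one.indicator hG

lemma integral_mul_condExp {Ω : Type*} {m mΩ : MeasurableSpace Ω} (hm : m ≤ mΩ) {P : Measure Ω}
    [IsProbabilityMeasure P] {w Y : Ω → ℝ} (hw : StronglyMeasurable[m] w)
    (hwY : Integrable (fun ω => w ω * Y ω) P) (hY : Integrable Y P) :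
    ∫ ω, w ω * Y ω ∂P = ∫ ω, w ω * (P[Y|m]) ω ∂P := by
  rw [← integral_condExp hm (f := fun ω => w ω * Y ω)]
  exact integral_congr_ae (condExp_mul_of_stronglyMeasurable_left hw hwY hY)

lemma abs_sub_le_mul_sub {h : ℕ → ℝ} {w : ℝ} (hstep : ∀ k, |h (k + 1) - h k| ≤ w) {m n : ℕ}
    (hmn : m ≤ n) : |h n - h m| ≤ w * ((n : ℝ) - m) := by
  induction n, hmn using Nat.le_induction with
  | base => simp
  | succ n _ ih =>
    have h1 := abs_le.1 ih
    have h2 := abs_le.1 (hstep n)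
    rw [abs_le]
    push_cast
    constructor <;> nlinarith

/-! ### The local-dependence argument -/

section

variable {Ω I : Type*} [Fintype I] [DecidableEq I]

/-- The contribution of one index `α` to the Stein identity. Replacing `S - 1` by the sum `V` of the
variables outside `B α` costs the `b₂` term, replacing `S` by `V` costs the `b₁` term, and the
remaining `(X α - p α) * h V` is conditioned on `sigmaB`, which gives the `b₃` term. -/
lemma integral_stein_term_le
    (m𝒜 : MeasurableSpace Ω) {mΩ : MeasurableSpace Ω} (h𝒜 : m𝒜 ≤ mΩ)
    (P : Measure Ω) [IsProbabilityMeasure P]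
    (X : I → Ω → ℕ) (hX01 : ∀ α ω, X α ω ≤ 1) (hXmeas : ∀ α, Measurable (X α))
    (B : I → Finset I) (hB : ∀ α, α ∈ B α)
    {h : ℕ → Ω → ℝ} (hh : ∀ k, Measurable[m𝒜] (h k)) {w : Ω → ℝ} (hw : Measurable[m𝒜] w)
    (hw1 : ∀ ω, w ω ≤ 1) (hhw : ∀ k ω, |h k ω| ≤ w ω)
    (hstep : ∀ k ω, |h (k + 1) ω - h k ω| ≤ w ω) (α : I) :
    Integrable (fun ω => (X α ω : ℝ) * h ((∑ β, X β ω) - 1) ω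
        - pA m𝒜 P X α ω * h (∑ β, X β ω) ω) P ∧
    Integrable (fun ω => w ω * ((∑ β ∈ B α, pA m𝒜 P X α ω * pA m𝒜 P X β ω)
        + (∑ β ∈ (B α).erase α, (P[fun ω' => ((X α ω' * X β ω' : ℕ) : ℝ)|m𝒜]) ω)
        + (P[fun ω' => abs ((P[fun ω'' => (X α ω'' : ℝ)
            - pA m𝒜 P X α ω''|sigmaB m𝒜 X (B α)]) ω')|m𝒜]) ω)) P ∧
    ∫ ω, ((X α ω : ℝ) * h ((∑ β, X β ω) - 1) ω - pA m𝒜 P X α ω * h (∑ β, X β ω) ω) ∂P ≤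
      ∫ ω, w ω * ((∑ β ∈ B α, pA m𝒜 P X α ω * pA m𝒜 P X β ω)
        + (∑ β ∈ (B α).erase α, (P[fun ω' => ((X α ω' * X β ω' : ℕ) : ℝ)|m𝒜]) ω)
        + (P[fun ω' => abs ((P[fun ω'' => (X α ω'' : ℝ)
            - pA m𝒜 P X α ω''|sigmaB m𝒜 X (B α)]) ω')|m𝒜]) ω) ∂P := by
  have hw0 : ∀ ω, 0 ≤ w ω := fun ω => (abs_nonneg _).trans (hhw 0 ω)
  have hσ : sigmaB m𝒜 X (B α) ≤ mΩ :=
    sup_le h𝒜 (iSup₂_le fun β _ => (hXmeas β).comap_le)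
  have hwm : Measurable w := hw.mono h𝒜 le_rfl
  have hhm : ∀ k, Measurable (h k) := fun k => (hh k).mono h𝒜 le_rfl
  have hXR : ∀ β, Measurable fun ω => (X β ω : ℝ) := fun β =>
    measurable_from_nat.comp (hXmeas β)
  have hX1 : ∀ β ω, |(X β ω : ℝ)| ≤ 1 := fun β ω => by
    rw [abs_of_nonneg (Nat.cast_nonneg _)]
    exact_mod_cast hX01 β ω
  have hXint : ∀ β, Integrable (fun ω => (X β ω : ℝ)) P := fun β =>
    Integrable.of_bound (hXR β).aestronglyMeasurable 1 (Eventually.of_forall (hX1 β))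
  have hXXint : ∀ β, Integrable (fun ω => ((X α ω * X β ω : ℕ) : ℝ)) P := fun β => by
    simp only [Nat.cast_mul]
    exact (hXint β).bdd_mul (hXR α).aestronglyMeasurable (Eventually.of_forall (hX1 α))
  have hpint : ∀ β, Integrable (pA m𝒜 P X β) P := fun β => integrable_condExp
  have hp0 : ∀ β, ∀ᵐ ω ∂P, 0 ≤ pA m𝒜 P X β ω := fun β =>
    condExp_nonneg (Eventually.of_forall fun ω => Nat.cast_nonneg _)
  have hp1 : ∀ β, ∀ᵐ ω ∂P, ‖pA m𝒜 P X β ω‖ ≤ 1 := fun β =>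
    ae_bdd_abs_condExp_of_ae_bdd_abs (R := 1) (Eventually.of_forall (hX1 β))
  have hpm : ∀ β, StronglyMeasurable[m𝒜] (pA m𝒜 P X β) := fun β => stronglyMeasurable_condExp
  have hwb : ∀ᵐ ω ∂P, ‖w ω‖ ≤ 1 := Eventually.of_forall fun ω => by
    rw [Real.norm_of_nonneg (hw0 ω)]
    exact hw1 ω
  have hwmul : ∀ {Y : Ω → ℝ}, Integrable Y P → Integrable (fun ω => w ω * Y ω) P :=
    fun hY => hY.bdd_mul hwm.aestronglyMeasurable hwb
  have hhmul : ∀ {Y : Ω → ℝ} {V : Ω → ℕ}, Measurable V → Integrable Y P →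
      Integrable (fun ω => Y ω * h (V ω) ω) P := fun {Y V} hV hY =>
    hY.mul_bdd (c := 1) (measurable_eval_random hhm hV).aestronglyMeasurable
      (Eventually.of_forall fun ω => (hhw _ ω).trans (hw1 ω))
  set D : Ω → ℝ := P[fun ω'' => (X α ω'' : ℝ) - pA m𝒜 P X α ω''|sigmaB m𝒜 X (B α)] with hD
  have hDint : Integrable D P := integrable_condExp
  have hSm : Measurable fun ω => ∑ β, X β ω := Finset.measurable_sum _ fun β _ => hXmeas β
  set V : Ω → ℕ := fun ω => ∑ β ∈ (B α)ᶜ, X β ω with hV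
  have hVm : Measurable V := Finset.measurable_sum _ fun β _ => hXmeas β
  have hVσ : Measurable[sigmaB m𝒜 X (B α)] V := by
    refine Finset.measurable_sum _ fun β hβ => ?_
    refine Measurable.of_comap_le (le_trans ?_ le_sup_right)
    exact le_iSup₂_of_le β (Finset.mem_compl.1 hβ) le_rfl
  have hppint : ∀ β, Integrable (fun ω => pA m𝒜 P X α ω * pA m𝒜 P X β ω) P := fun β =>
    (hpint β).bdd_mul (hpint α).aestronglyMeasurable (hp1 α)
  have hpXint : ∀ β, Integrable (fun ω => pA m𝒜 P X α ω * (X β ω : ℝ)) P := fun β =>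
    (hXint β).bdd_mul (hpint α).aestronglyMeasurable (hp1 α)
  have hXpint : Integrable (fun ω => (X α ω : ℝ) - pA m𝒜 P X α ω) P := (hXint α).sub (hpint α)
  have hL : Integrable (fun ω => (X α ω : ℝ) * h ((∑ β, X β ω) - 1) ω
        - pA m𝒜 P X α ω * h (∑ β, X β ω) ω) P :=
    (hhmul (hSm.sub_const 1) (hXint α)).sub
      (hhmul hSm (hpint α))
  -- The three pieces of the upper bound, before and after conditioning on `m𝒜`.
  have i1 : Integrable (fun ω => ∑ β ∈ B α, w ω * (pA m𝒜 P X α ω * pA m𝒜 P X β ω)) P :=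
    integrable_finsetSum _ fun β _ => hwmul (hppint β)
  have i2 : Integrable (fun ω => ∑ β ∈ (B α).erase α,
      w ω * (P[fun ω' => ((X α ω' * X β ω' : ℕ) : ℝ)|m𝒜]) ω) P :=
    integrable_finsetSum _ fun β _ => hwmul integrable_condExp
  have i3 : Integrable (fun ω => w ω * (P[fun ω' => abs (D ω')|m𝒜]) ω) P := hwmul integrable_condExp
  have j1 : Integrable (fun ω => ∑ β ∈ B α, w ω * (pA m𝒜 P X α ω * (X β ω : ℝ))) P :=
    integrable_finsetSum _ fun β _ => hwmul (hpXint β)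
  have j2 : Integrable (fun ω => ∑ β ∈ (B α).erase α, w ω * ((X α ω * X β ω : ℕ) : ℝ)) P :=
    integrable_finsetSum _ fun β _ => hwmul (hXXint β)
  have j3 : Integrable (fun ω => ((X α ω : ℝ) - pA m𝒜 P X α ω) * h (V ω) ω) P :=
    hhmul hVm hXpint
  have e1 : ∫ ω, ∑ β ∈ B α, w ω * (pA m𝒜 P X α ω * (X β ω : ℝ)) ∂P
      = ∫ ω, ∑ β ∈ B α, w ω * (pA m𝒜 P X α ω * pA m𝒜 P X β ω) ∂P := by
    rw [integral_finsetSum _ fun β _ => hwmul (hpXint β),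
      integral_finsetSum _ fun β _ => hwmul (hppint β)]
    refine Finset.sum_congr rfl fun β _ => ?_
    simp only [← mul_assoc]
    refine integral_mul_condExp h𝒜 (hw.stronglyMeasurable.mul (hpm α)) ?_ (hXint β)
    simpa only [← mul_assoc] using hwmul (hpXint β)
  have e2 : ∫ ω, ∑ β ∈ (B α).erase α, w ω * ((X α ω * X β ω : ℕ) : ℝ) ∂P
      = ∫ ω, ∑ β ∈ (B α).erase α,
        w ω * (P[fun ω' => ((X α ω' * X β ω' : ℕ) : ℝ)|m𝒜]) ω ∂P := by
    rw [integral_finsetSum _ fun β _ => hwmul (hXXint β),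
      integral_finsetSum _ fun β _ => hwmul integrable_condExp]
    exact Finset.sum_congr rfl fun β _ =>
      integral_mul_condExp h𝒜 hw.stronglyMeasurable (hwmul (hXXint β)) (hXXint β)
  have e3 : ∫ ω, ((X α ω : ℝ) - pA m𝒜 P X α ω) * h (V ω) ω ∂P
      ≤ ∫ ω, w ω * (P[fun ω' => abs (D ω')|m𝒜]) ω ∂P := by
    have h𝒜σ : m𝒜 ≤ sigmaB m𝒜 X (B α) := le_sup_left
    have hhVσ : Measurable[sigmaB m𝒜 X (B α)] fun ω => h (V ω) ω :=
      measurable_eval_random (fun k => (hh k).mono h𝒜σ le_rfl) hVσ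
    simp only [mul_comm _ (h _ _)] at j3 ⊢
    rw [integral_mul_condExp hσ hhVσ.stronglyMeasurable j3 hXpint,
      ← integral_mul_condExp h𝒜 hw.stronglyMeasurable (hwmul hDint.abs) hDint.abs]
    refine integral_mono ?_ (hwmul hDint.abs) fun ω => ?_
    · simpa only [mul_comm _ (h _ _)] using hhmul hVm hDint
    · calc h (V ω) ω * D ω ≤ |h (V ω) ω * D ω| := le_abs_self _
        _ = |h (V ω) ω| * |D ω| := abs_mul _ _
        _ ≤ w ω * |D ω| := mul_le_mul_of_nonneg_right (hhw _ ω) (abs_nonneg _)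
  have hR : Integrable (fun ω => w ω * ((∑ β ∈ B α, pA m𝒜 P X α ω * pA m𝒜 P X β ω)
        + (∑ β ∈ (B α).erase α, (P[fun ω' => ((X α ω' * X β ω' : ℕ) : ℝ)|m𝒜]) ω)
        + (P[fun ω' => abs (D ω')|m𝒜]) ω)) P := by
    simp only [mul_add, Finset.mul_sum]
    exact (i1.add i2).add i3
  refine ⟨hL, hR, ?_⟩
  have i12 : Integrable (fun ω => (∑ β ∈ B α, w ω * (pA m𝒜 P X α ω * pA m𝒜 P X β ω))
      + ∑ β ∈ (B α).erase α,
        w ω * (P[fun ω' => ((X α ω' * X β ω' : ℕ) : ℝ)|m𝒜]) ω) P := i1.add i2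
  have j12 : Integrable (fun ω => (∑ β ∈ B α, w ω * (pA m𝒜 P X α ω * (X β ω : ℝ)))
      + ∑ β ∈ (B α).erase α, w ω * ((X α ω * X β ω : ℕ) : ℝ)) P := j1.add j2
  calc ∫ ω, ((X α ω : ℝ) * h ((∑ β, X β ω) - 1) ω - pA m𝒜 P X α ω * h (∑ β, X β ω) ω) ∂P
      ≤ ∫ ω, ((∑ β ∈ B α, w ω * (pA m𝒜 P X α ω * (X β ω : ℝ)))
          + (∑ β ∈ (B α).erase α, w ω * ((X α ω * X β ω : ℕ) : ℝ))
          + ((X α ω : ℝ) - pA m𝒜 P X α ω) * h (V ω) ω) ∂P := by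
        refine integral_mono_ae hL ((j1.add j2).add j3) ?_
        filter_upwards [hp0 α] with ω hp
        have hSV : ∑ β, X β ω = (∑ β ∈ B α, X β ω) + V ω :=
          (Finset.sum_add_sum_compl (B α) fun β => X β ω).symm
        have hBe : ∑ β ∈ B α, X β ω = X α ω + ∑ β ∈ (B α).erase α, X β ω :=
          (Finset.add_sum_erase _ _ (hB α)).symm
        have k1 := abs_le.1 (abs_sub_le_mul_sub (h := fun k => h k ω) (fun k => hstep k ω)
          (m := V ω) (n := ∑ β, X β ω) (by omega))
        have k1' : pA m𝒜 P X α ω * (h (V ω) ω - h (∑ β, X β ω) ω)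
            ≤ ∑ β ∈ B α, w ω * (pA m𝒜 P X α ω * (X β ω : ℝ)) := by
          have : (∑ β ∈ B α, w ω * (pA m𝒜 P X α ω * (X β ω : ℝ)))
              = pA m𝒜 P X α ω * (w ω * (((∑ β, X β ω : ℕ) : ℝ) - V ω)) := by
            rw [hSV]
            push_cast
            rw [add_sub_cancel_right, Finset.mul_sum, Finset.mul_sum]
            exact Finset.sum_congr rfl fun β _ => by ring
          rw [this]
          exact mul_le_mul_of_nonneg_left (by linarith [k1.1]) hp
        have k2 : (X α ω : ℝ) * (h ((∑ β, X β ω) - 1) ω - h (V ω) ω)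
            ≤ ∑ β ∈ (B α).erase α, w ω * ((X α ω * X β ω : ℕ) : ℝ) := by
          rcases Nat.le_one_iff_eq_zero_or_eq_one.1 (hX01 α ω) with h0 | h0
          · simp [h0]
          · have hS1 : (∑ β, X β ω) - 1 = (∑ β ∈ (B α).erase α, X β ω) + V ω := by omega
            have := (abs_le.1 (abs_sub_le_mul_sub (h := fun k => h k ω) (fun k => hstep k ω)
              (m := V ω) (n := (∑ β, X β ω) - 1) (by omega))).2
            rw [hS1] at this ⊢
            push_cast at this
            rw [add_sub_cancel_right, Finset.mul_sum] at this
            simpa [h0] using this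
        linear_combination k1' + k2
    _ ≤ _ := by
        rw [integral_add j12 j3, integral_add j1 j2, e1, e2]
        simp only [mul_add, Finset.mul_sum]
        rw [integral_add i12 i3, integral_add i1 i2]
        linarith [e3]

/-! ### The bound for a fixed event -/

lemma integral_stein_le
    (m𝒜 : MeasurableSpace Ω) {mΩ : MeasurableSpace Ω} (h𝒜 : m𝒜 ≤ mΩ)
    (P : Measure Ω) [IsProbabilityMeasure P]
    (X : I → Ω → ℕ) (hX01 : ∀ α ω, X α ω ≤ 1) (hXmeas : ∀ α, Measurable (X α))
    (B : I → Finset I) (hB : ∀ α, α ∈ B α)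
    {h : ℕ → Ω → ℝ} (hh : ∀ k, Measurable[m𝒜] (h k)) {w : Ω → ℝ} (hw : Measurable[m𝒜] w)
    (hw1 : ∀ ω, w ω ≤ 1) (hhw : ∀ k ω, |h k ω| ≤ w ω)
    (hstep : ∀ k ω, |h (k + 1) ω - h k ω| ≤ w ω) :
    Integrable (fun ω => w ω * (b1 m𝒜 P X B ω + b2 m𝒜 P X B ω + b3 m𝒜 P X B ω)) P ∧
    ∫ ω, (((∑ β, X β ω : ℕ) : ℝ) * h ((∑ β, X β ω) - 1) ω
        - (∑ α, pA m𝒜 P X α ω) * h (∑ β, X β ω) ω) ∂P ≤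
      ∫ ω, w ω * (b1 m𝒜 P X B ω + b2 m𝒜 P X B ω + b3 m𝒜 P X B ω) ∂P := by
  have key := integral_stein_term_le m𝒜 h𝒜 P X hX01 hXmeas B hB hh hw hw1 hhw hstep
  unfold b1 b2 b3
  simp only [← Finset.sum_add_distrib]
  simp only [Finset.mul_sum, Nat.cast_sum, Finset.sum_mul, ← Finset.sum_sub_distrib]
  refine ⟨integrable_finsetSum _ fun α _ => (key α).2.1, ?_⟩
  rw [integral_finsetSum _ fun α _ => (key α).1, integral_finsetSum _ fun α _ => (key α).2.1]
  exact Finset.sum_le_sum fun α _ => (key α).2.2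

lemma toReal_eq_poissonMean {ν : Measure ℕ} {r : ℝ} (hν : IsPoissonNat ν r) (A : Set ℕ) :
    (ν A).toReal = poissonMean r (A.indicator 1) := by
  have := hν.1
  have h1 : (ν A).toReal = ∫ n, A.indicator (1 : ℕ → ℝ) n ∂ν := by
    rw [integral_indicator_one (MeasurableSet.of_discrete)]
    rfl
  have hint : Integrable (A.indicator (1 : ℕ → ℝ)) ν :=
    (integrable_const (1 : ℝ)).indicator MeasurableSet.of_discrete
  rw [h1, integral_countable hint, poissonMean, ← tsum_mul_left]
  refine tsum_congr fun n => ?_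
  rw [smul_eq_mul, measureReal_def, hν.2 n]
  ring

/-- The bound for a single event `A`. On the `m𝒜`-measurable event `G = {b₁ + b₂ + b₃ ≤ 1}` the
Stein identity with the random parameter `E[S | m𝒜]` is used, and off `G` the trivial bound `1`. -/
lemma abs_map_sub_le
    (m𝒜 : MeasurableSpace Ω) {mΩ : MeasurableSpace Ω} (h𝒜 : m𝒜 ≤ mΩ)
    (P : Measure Ω) [IsProbabilityMeasure P]
    (X : I → Ω → ℕ) (hX01 : ∀ α ω, X α ω ≤ 1) (hXmeas : ∀ α, Measurable (X α))
    (B : I → Finset I) (hB : ∀ α, α ∈ B α)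
    {μ₀ : ℝ} (hμ₀ : 0 < μ₀) {ν : Measure ℕ} (hν : IsPoissonNat ν μ₀) (A : Set ℕ) :
    |(Measure.map (fun ω => ∑ α : I, X α ω) P A).toReal - (ν A).toReal| ≤
      (∫ ω, min 1 (b1 m𝒜 P X B ω + b2 m𝒜 P X B ω + b3 m𝒜 P X B ω) ∂P) +
      ∫ ω, min 1 |condMean m𝒜 P X ω - μ₀| ∂P := by
  set a : ℕ → ℝ := A.indicator 1 with ha
  have ha01 : ∀ n, 0 ≤ a n ∧ a n ≤ 1 := fun n => by
    by_cases hn : n ∈ A <;> simp [ha, hn]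
  have ha1 : ∀ n, |a n| ≤ 1 := fun n => by
    rw [abs_of_nonneg (ha01 n).1]
    exact (ha01 n).2
  have had : ∀ n, |fdiff a n| ≤ 1 := fun n => by
    have h1 := ha01 n
    have h2 := ha01 (n + 1)
    rw [fdiff, abs_le]
    constructor <;> linarith
  have hpo01 : ∀ {s : ℝ}, 0 ≤ s → 0 ≤ poissonMean s a ∧ poissonMean s a ≤ 1 := fun hs =>
    ⟨poissonMean_nonneg (fun n => (ha01 n).1) hs, (abs_le.1 (abs_poissonMean_le ha1 hs)).2⟩
  set S : Ω → ℕ := fun ω => ∑ α : I, X α ω with hS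
  have hSm : Measurable S := Finset.measurable_sum _ fun α _ => hXmeas α
  have hpm : ∀ β, Measurable[m𝒜] (pA m𝒜 P X β) := fun β =>
    stronglyMeasurable_condExp.measurable
  -- The conditional mean is only a.e. nonnegative; truncation makes it nonnegative everywhere.
  set L : Ω → ℝ := fun ω => max (∑ α, pA m𝒜 P X α ω) 0 with hLdef
  have hL0 : ∀ ω, 0 ≤ L ω := fun ω => le_max_right _ _
  have hLm : Measurable[m𝒜] L :=
    (Finset.measurable_sum _ fun α _ => hpm α).max measurable_const
  have hLp : ∀ᵐ ω ∂P, ∑ α, pA m𝒜 P X α ω = L ω := by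
    have hp0 : ∀ᵐ ω ∂P, ∀ β, 0 ≤ pA m𝒜 P X β ω := ae_all_iff.2 fun β =>
      condExp_nonneg (Eventually.of_forall fun ω => Nat.cast_nonneg _)
    filter_upwards [hp0] with ω hω
    exact (max_eq_left (Finset.sum_nonneg fun β _ => hω β)).symm
  have hLc : ∀ᵐ ω ∂P, condMean m𝒜 P X ω = L ω := by
    have h1 := condExp_finsetSum (μ := P) (s := Finset.univ) (f := fun α ω => (X α ω : ℝ))
      (fun α _ => Integrable.of_bound
        (measurable_from_nat.comp (hXmeas α)).aestronglyMeasurable 1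
        (Eventually.of_forall fun ω => by
          rw [Real.norm_natCast]
          exact_mod_cast hX01 α ω)) m𝒜
    have h2 : (fun ω => ((∑ α : I, X α ω : ℕ) : ℝ)) = ∑ α : I, fun ω => (X α ω : ℝ) := by
      ext ω
      simp
    filter_upwards [h1, hLp] with ω h3 h4
    rw [← h4, condMean, h2, h3, Finset.sum_apply]
    rfl
  set b : Ω → ℝ := fun ω => b1 m𝒜 P X B ω + b2 m𝒜 P X B ω + b3 m𝒜 P X B ω with hb
  have hbm : Measurable[m𝒜] b := by
    refine Measurable.add (Measurable.add ?_ ?_) ?_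
    · exact Finset.measurable_sum _ fun α _ => Finset.measurable_sum _ fun β _ =>
        (hpm α).mul (hpm β)
    · exact Finset.measurable_sum _ fun α _ => Finset.measurable_sum _ fun β _ =>
        stronglyMeasurable_condExp.measurable
    · exact Finset.measurable_sum _ fun α _ => stronglyMeasurable_condExp.measurable
  set w : Ω → ℝ := {ω | b ω ≤ 1}.indicator 1 with hw
  have hGm : MeasurableSet[m𝒜] {ω | b ω ≤ 1} := hbm measurableSet_Iic
  have hwm : Measurable[m𝒜] w := measurable_indicator_one hGm
  have hw01 : ∀ ω, 0 ≤ w ω ∧ w ω ≤ 1 := fun ω => by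
    by_cases hω : b ω ≤ 1 <;> simp [hw, hω]
  have hwmin : ∀ ω, w ω * b ω + (1 - w ω) = min 1 (b ω) := fun ω => by
    by_cases hω : b ω ≤ 1
    · simp [hw, hω]
    · simp [hw, hω, (not_le.1 hω).le]
  have hwint : Integrable w P :=
    Integrable.of_bound (hwm.mono h𝒜 le_rfl).aestronglyMeasurable 1
      (Eventually.of_forall fun ω => by
        rw [Real.norm_of_nonneg (hw01 ω).1]
        exact (hw01 ω).2)
  set Q : Ω → ℝ := fun ω => a (S ω) - poissonMean (L ω) a with hQ
  have haSm : Measurable fun ω => a (S ω) :=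
    (Measurable.of_discrete (f := a)).comp hSm
  have hpoLm : Measurable fun ω => poissonMean (L ω) a :=
    (measurable_poissonMean ha1).comp (hLm.mono h𝒜 le_rfl)
  have haSint : Integrable (fun ω => a (S ω)) P :=
    Integrable.of_bound haSm.aestronglyMeasurable 1 (Eventually.of_forall fun ω => ha1 _)
  have hpoint : Integrable (fun ω => poissonMean (L ω) a) P :=
    Integrable.of_bound hpoLm.aestronglyMeasurable 1
      (Eventually.of_forall fun ω => abs_poissonMean_le ha1 (hL0 ω))
  have hQint : Integrable Q P := haSint.sub hpoint
  have hQ1 : ∀ ω, |Q ω| ≤ 1 := fun ω => by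
    have h1 := ha01 (S ω)
    have h2 := hpo01 (hL0 ω)
    rw [abs_le]
    constructor <;> simp only [hQ] <;> linarith
  have hstein : ∀ ε : ℝ, |ε| = 1 → ε * ∫ ω, Q ω ∂P ≤ ∫ ω, min 1 (b ω) ∂P := by
    intro ε hε
    have hfm : ∀ k, Measurable[m𝒜] fun ω => steinSol (L ω) a k := fun k =>
      (measurable_steinSol ha1 k).comp hLm
    have habs : ∀ ω (x : ℝ), |x| ≤ 1 → |ε * w ω * x| ≤ w ω := fun ω x hx => by
      rw [abs_mul, abs_mul, hε, one_mul, abs_of_nonneg (hw01 ω).1]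
      exact mul_le_of_le_one_right (hw01 ω).1 hx
    obtain ⟨hbint, hle⟩ := integral_stein_le m𝒜 h𝒜 P X hX01 hXmeas B hB
      (h := fun k ω => ε * w ω * steinSol (L ω) a k) (w := w)
      (fun k => (hwm.const_mul ε).mul (hfm k)) hwm (fun ω => (hw01 ω).2)
      (fun k ω => habs ω _ (abs_steinSol_le had (hL0 ω) k))
      (fun k ω => by
        rw [← mul_sub]
        exact habs ω _ (abs_steinSol_sub_le had (hL0 ω) k))
    have hwQ : Integrable (fun ω => ε * w ω * Q ω) P :=
      hwint.const_mul ε |>.mul_bdd hQint.aestronglyMeasurable (Eventually.of_forall hQ1)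
    have hle' : ∫ ω, ε * w ω * Q ω ∂P ≤ ∫ ω, w ω * b ω ∂P := by
      refine le_of_eq_of_le (integral_congr_ae ?_) hle
      filter_upwards [hLp] with ω hω
      rw [hω]
      have := steinSol_eq ha1 (L ω) (S ω)
      simp only [hQ, ← this]
      ring
    calc ε * ∫ ω, Q ω ∂P = ∫ ω, ε * Q ω ∂P := (integral_const_mul _ _).symm
      _ ≤ ∫ ω, (ε * w ω * Q ω + (1 - w ω)) ∂P := by
          refine integral_mono (hQint.const_mul ε) (hwQ.add ((integrable_const 1).sub hwint))
            fun ω => ?_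
          have h1 : ε * Q ω ≤ 1 := by
            refine (le_abs_self _).trans ?_
            rw [abs_mul, hε, one_mul]
            exact hQ1 ω
          have h2 := mul_le_mul_of_nonneg_left h1 (sub_nonneg.2 (hw01 ω).2)
          simp only
          linarith
      _ = (∫ ω, ε * w ω * Q ω ∂P) + ∫ ω, (1 - w ω) ∂P :=
          integral_add hwQ ((integrable_const 1).sub hwint)
      _ ≤ (∫ ω, w ω * b ω ∂P) + ∫ ω, (1 - w ω) ∂P := by gcongr
      _ = ∫ ω, (w ω * b ω + (1 - w ω)) ∂P :=
          (integral_add hbint ((integrable_const 1).sub hwint)).symm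
      _ = ∫ ω, min 1 (b ω) ∂P := by simp only [hwmin]
  have hQle : |∫ ω, Q ω ∂P| ≤ ∫ ω, min 1 (b ω) ∂P := by
    rw [abs_le']
    constructor
    · simpa using hstein 1 (by simp)
    · simpa using hstein (-1) (by simp)
  have hpole : |∫ ω, (poissonMean (L ω) a - poissonMean μ₀ a) ∂P|
      ≤ ∫ ω, min 1 |condMean m𝒜 P X ω - μ₀| ∂P := by
    refine norm_integral_le_of_norm_le (f := fun ω => poissonMean (L ω) a - poissonMean μ₀ a) ?_ ?_
    · refine Integrable.of_bound ?_ 1 (Eventually.of_forall fun ω => ?_)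
      · have : Measurable (condMean m𝒜 P X) :=
          (stronglyMeasurable_condExp.measurable).mono h𝒜 le_rfl
        exact (measurable_const.min (this.sub_const μ₀).abs).aestronglyMeasurable
      · rw [Real.norm_of_nonneg (le_min zero_le_one (abs_nonneg _))]
        exact min_le_left _ _
    · filter_upwards [hLc] with ω hω
      rw [hω, Real.norm_eq_abs]
      refine le_min ?_ (by simpa using abs_poissonMean_sub_le ha1 had (hL0 ω) hμ₀.le)
      have h1 := hpo01 (hL0 ω)
      have h2 := hpo01 hμ₀.le
      rw [abs_le]
      constructor <;> linarith
  have hmap : (Measure.map S P A).toReal = ∫ ω, a (S ω) ∂P := by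
    rw [Measure.map_apply hSm MeasurableSet.of_discrete, ← measureReal_def,
      ← integral_indicator_one (hSm MeasurableSet.of_discrete)]
    rfl
  have hsplit : (Measure.map S P A).toReal - (ν A).toReal
      = (∫ ω, Q ω ∂P) + ∫ ω, (poissonMean (L ω) a - poissonMean μ₀ a) ∂P := by
    rw [hmap, toReal_eq_poissonMean hν, ← ha, integral_sub haSint hpoint,
      integral_sub hpoint (integrable_const _), integral_const]
    simp
  rw [hsplit]
  exact (abs_add_le _ _).trans (add_le_add hQle hpole)

end

end ChenStein

end

open MeasureTheory ProbabilityTheory Filter in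
/-- **Lemma (conditional Chen–Stein bound against a fixed Poisson law).**  With the
conditional Chen–Stein setup: for every `μ₀ > 0` and every Poisson random variable `Z` with
parameter `μ₀` (with law `ν`),
`d_TV(S, Z) ≤ E[min(1, b₁ + b₂ + b₃)] + E[min(1, |E[S|𝒜] - μ₀|)]`. -/
theorem conditional_chen_stein_poisson
    {Ω : Type*} {I : Type*} [Fintype I] [DecidableEq I]
    (m𝒜 : MeasurableSpace Ω) {mΩ : MeasurableSpace Ω} (h𝒜 : m𝒜 ≤ mΩ)
    (P : Measure Ω) [IsProbabilityMeasure P]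
    (X : I → Ω → ℕ) (hX01 : ∀ α ω, X α ω ≤ 1) (hXmeas : ∀ α, Measurable (X α))
    (B : I → Finset I) (hB : ∀ α, α ∈ B α)
    (μ₀ : ℝ) (hμ₀ : 0 < μ₀) (ν : Measure ℕ) (hν : IsPoissonNat ν μ₀) :
    ChenStein.dTVNat (Measure.map (fun ω => ∑ α : I, X α ω) P) ν ≤
      (∫ ω, min 1 (ChenStein.b1 m𝒜 P X B ω + ChenStein.b2 m𝒜 P X B ω +
        ChenStein.b3 m𝒜 P X B ω) ∂P) +
      ∫ ω, min 1 |ChenStein.condMean m𝒜 P X ω - μ₀| ∂P := by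
  exact ciSup_le fun A => ChenStein.abs_map_sub_le m𝒜 h𝒜 P X hX01 hXmeas B hB hμ₀ hν A
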